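/- Let G be a game with probabilistic uncertainty with priority function p_G : L → {0,…,d}, and let H be the partial-observation game constructed from G with priority function p_H((ℓ,ℓ')) = p_H((ℓ,ℓ',σ_I)) = p_G(ℓ) and complete observation for Player 2. Player 1 has a sure winning strategy from ℓ_0 in G for Parity(p_G) against all all-powerful Player-2 strategies if and only if Player 1 has an observation-based strategy in H that is sure winning for Parity(p_H) from every state (ℓ_0, ℓ) with un(ℓ_0)(ℓ) > 0 against all Player-2 strategies. -/

import Mathlib

open Finset MeasureTheory
open scoped Classical

/- ### Games with probabilistic uncertainty -/

/-- A game with probabilistic uncertainty `(L, Σ_I, Σ_O, Δ, un)`. -/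
structure PUGame (L Ai Ao : Type) [Fintype L] [Fintype Ai] [Fintype Ao] : Type where
  Δ : L → Ai → Ao → L → ℝ
  Δ_nonneg : ∀ ℓ σi σo ℓ', 0 ≤ Δ ℓ σi σo ℓ'
  Δ_sum_one : ∀ ℓ σi σo, ∑ ℓ', Δ ℓ σi σo ℓ' = 1
  un : L → L → ℝ
  un_nonneg : ∀ ℓ ℓ', 0 ≤ un ℓ ℓ'
  un_sum_one : ∀ ℓ, ∑ ℓ', un ℓ ℓ' = 1

/-- A finite prefix `ℓ₀ σ₀ᶦ σ₀ᵒ ℓ₁ … ℓₙ`: the initial location together with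
the list of steps `(σᶦ, σᵒ, ℓ)` in *reverse* chronological order. -/
abbrev Pref (L Ai Ao : Type) : Type := L × List (Ai × Ao × L)

variable {L Ai Ao S A : Type}

/-- Last location of a prefix. -/
def lastLoc : Pref L Ai Ao → L
  | (ℓ0, []) => ℓ0
  | (_, t :: _) => t.2.2

/-- The sequence of input/output letters of a prefix (reverse chronological order). -/
def acts (ρ : Pref L Ai Ao) : List (Ai × Ao) := ρ.2.map fun t => (t.1, t.2.1)

/-- The locations occurring in a prefix. -/
def locList (ρ : Pref L Ai Ao) : List L := ρ.1 :: ρ.2.map fun t => t.2.2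

/-- Extension `ρ σᶦ σᵒ ℓ` of a prefix. -/
def extendPref (ρ : Pref L Ai Ao) (σi : Ai) (σo : Ao) (ℓ : L) : Pref L Ai Ao :=
  (ρ.1, (σi, σo, ℓ) :: ρ.2)

section Core
variable [Fintype L] [Fintype Ai] [Fintype Ao]

def IsPrefAux (G : PUGame L Ai Ao) (ℓ0 : L) : List (Ai × Ao × L) → Prop
  | [] => True
  | t :: rest => IsPrefAux G ℓ0 rest ∧ 0 < G.Δ (lastLoc (ℓ0, rest)) t.1 t.2.1 t.2.2

/-- `ρ` is a genuine prefix of a play of `G`: every transition along `ρ` has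
positive probability. -/
def IsPref (G : PUGame L Ai Ao) (ρ : Pref L Ai Ao) : Prop := IsPrefAux G ρ.1 ρ.2

/-- The set of action-matching sequences of `ρ`: same length, same input and
output letters, arbitrary locations. -/
noncomputable def ActMt (ρ : Pref L Ai Ao) : Finset (Pref L Ai Ao) :=
  (Finset.univ : Finset (L × (Fin ρ.2.length → L))).image fun p =>
    (p.1, List.ofFn fun i => ((ρ.2.get i).1, (ρ.2.get i).2.1, p.2 i))

/-- `ObsSeq G ρ ρ'`: the probability of observing `ρ'` given that the actual
prefix is `ρ`.  (Closed form of the inductive definition: the product of the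
`un`-probabilities of the observed locations if the actions match, `0`
otherwise.) -/
noncomputable def ObsSeq (G : PUGame L Ai Ao) (ρ ρ' : Pref L Ai Ao) : ℝ :=
  if acts ρ' = acts ρ then (List.zipWith G.un (locList ρ) (locList ρ')).prod else 0

noncomputable def conePrAux (G : PUGame L Ai Ao) (α : Pref L Ai Ao → Ai → ℝ)
    (β : Pref L Ai Ao → Ai → Ao → ℝ) (ℓ0 : L) : List (Ai × Ao × L) → ℝ
  | [] => 1
  | t :: rest =>
      conePrAux G α β ℓ0 rest *
        ∑ ρ' ∈ ActMt ((ℓ0, rest) : Pref L Ai Ao),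
          ObsSeq G (ℓ0, rest) ρ' * α ρ' t.1 * β (ℓ0, rest) t.1 t.2.1 *
            G.Δ (lastLoc (ℓ0, rest)) t.1 t.2.1 t.2.2

/-- Cone probability `Pr^{α,β}_{ρ.1}(Cone(ρ))` in `G`, where Player 2 observes
the actual history. -/
noncomputable def conePr (G : PUGame L Ai Ao) (α : Pref L Ai Ao → Ai → ℝ)
    (β : Pref L Ai Ao → Ai → Ao → ℝ) (ρ : Pref L Ai Ao) : ℝ :=
  conePrAux G α β ρ.1 ρ.2

noncomputable def conePrAAux (G : PUGame L Ai Ao) (α : Pref L Ai Ao → Ai → ℝ)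
    (β : Pref L Ai Ao → Pref L Ai Ao → Ai → Ao → ℝ) (ℓ0 : L) : List (Ai × Ao × L) → ℝ
  | [] => 1
  | t :: rest =>
      conePrAAux G α β ℓ0 rest *
        ∑ ρ' ∈ ActMt ((ℓ0, rest) : Pref L Ai Ao),
          ObsSeq G (ℓ0, rest) ρ' * α ρ' t.1 * β (ℓ0, rest) ρ' t.1 t.2.1 *
            G.Δ (lastLoc (ℓ0, rest)) t.1 t.2.1 t.2.2

/-- Cone probability `Pr^{α,β^A}_{ρ.1}(Cone(ρ))` in `G` for an all-powerful
Player 2 (observing both the actual and the observed history). -/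
noncomputable def conePrA (G : PUGame L Ai Ao) (α : Pref L Ai Ao → Ai → ℝ)
    (β : Pref L Ai Ao → Pref L Ai Ao → Ai → Ao → ℝ) (ρ : Pref L Ai Ao) : ℝ :=
  conePrAAux G α β ρ.1 ρ.2

end Core

/-- A randomized Player-1 strategy in `G`. -/
structure Strat1 (L Ai Ao : Type) [Fintype Ai] : Type where
  toFun : Pref L Ai Ao → Ai → ℝ
  nonneg : ∀ ρ σi, 0 ≤ toFun ρ σi
  sum_one : ∀ ρ, ∑ σi, toFun ρ σi = 1

/-- A randomized Player-2 strategy in `G` (observing the actual history). -/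
structure Strat2 (L Ai Ao : Type) [Fintype Ao] : Type where
  toFun : Pref L Ai Ao → Ai → Ao → ℝ
  nonneg : ∀ ρ σi σo, 0 ≤ toFun ρ σi σo
  sum_one : ∀ ρ σi, ∑ σo, toFun ρ σi σo = 1

/-- An all-powerful randomized Player-2 strategy in `G` (observing both the
actual and the observed history). -/
structure StratA (L Ai Ao : Type) [Fintype Ao] : Type where
  toFun : Pref L Ai Ao → Pref L Ai Ao → Ai → Ao → ℝ
  nonneg : ∀ ρ ρ' σi σo, 0 ≤ toFun ρ ρ' σi σo
  sum_one : ∀ ρ ρ' σi, ∑ σo, toFun ρ ρ' σi σo = 1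

/- ### The partial-observation game `H` constructed from `G` -/

/-- A (stutter-suppressed) history of the partial-observation game `H`:
an initial state in `L × L` and a list of steps, in reverse order. -/
abbrev HPref (L Ai Ao : Type) : Type := (L × L) × List (Ai × Ao × (L × L))

def hLast : HPref L Ai Ao → L × L
  | (s0, []) => s0
  | (_, t :: _) => t.2.2

/-- First-component (actual) `G`-prefix of an `H`-history. -/
def g1 (ρH : HPref L Ai Ao) : Pref L Ai Ao :=
  (ρH.1.1, ρH.2.map fun t => (t.1, t.2.1, t.2.2.1))

/-- Second-component (observed) `G`-prefix of an `H`-history. -/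
def g2 (ρH : HPref L Ai Ao) : Pref L Ai Ao :=
  (ρH.1.2, ρH.2.map fun t => (t.1, t.2.1, t.2.2.2))

/-- Pairing of two action-matching `G`-prefixes into an `H`-history. -/
def h12 (ρ1 ρ2 : Pref L Ai Ao) : HPref L Ai Ao :=
  ((ρ1.1, ρ2.1), List.zipWith (fun t u => (t.1, t.2.1, (t.2.2, u.2.2))) ρ1.2 ρ2.2)

/-- A randomized Player-1 strategy in `H`. -/
structure HStrat1 (L Ai Ao : Type) [Fintype Ai] : Type where
  toFun : HPref L Ai Ao → Ai → ℝ
  nonneg : ∀ ρ σi, 0 ≤ toFun ρ σi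
  sum_one : ∀ ρ, ∑ σi, toFun ρ σi = 1

/-- A randomized Player-2 strategy in `H`. -/
structure HStrat2 (L Ai Ao : Type) [Fintype Ao] : Type where
  toFun : HPref L Ai Ao → Ai → Ao → ℝ
  nonneg : ∀ ρ σi σo, 0 ≤ toFun ρ σi σo
  sum_one : ∀ ρ σi, ∑ σo, toFun ρ σi σo = 1

/-- Player-1 observation-based: depends only on the second components and the
actions of the history. -/
def ObsBased1 (α : HPref L Ai Ao → Ai → ℝ) : Prop :=
  ∀ ρH ρH' : HPref L Ai Ao, g2 ρH = g2 ρH' → α ρH = α ρH'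

/-- Player-2 observation-based: depends only on the first components and the
actions of the history. -/
def ObsBased2 (β : HPref L Ai Ao → Ai → Ao → ℝ) : Prop :=
  ∀ ρH ρH' : HPref L Ai Ao, g1 ρH = g1 ρH' → β ρH = β ρH'

section HGame
variable [Fintype L] [Fintype Ai] [Fintype Ao]

/-- The initial distribution `μ` of `H` for the initial location `ℓ0` of `G`. -/
noncomputable def initDist (G : PUGame L Ai Ao) (ℓ0 : L) : L × L → ℝ :=
  fun s => if s.1 = ℓ0 then G.un ℓ0 s.2 else 0

noncomputable def conePrHAux (G : PUGame L Ai Ao) (μ : L × L → ℝ)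
    (α : HPref L Ai Ao → Ai → ℝ) (β : HPref L Ai Ao → Ai → Ao → ℝ)
    (s0 : L × L) : List (Ai × Ao × (L × L)) → ℝ
  | [] => μ s0
  | t :: rest =>
      conePrHAux G μ α β s0 rest * α (s0, rest) t.1 * β (s0, rest) t.1 t.2.1 *
        G.Δ (hLast ((s0, rest) : HPref L Ai Ao)).1 t.1 t.2.1 t.2.2.1 *
        G.un t.2.2.1 t.2.2.2

/-- Cone probability `Pr^{α,β}_μ(Cone(ρH))` in the game `H` constructed from
`G`, with initial distribution `μ`. -/
noncomputable def conePrH (G : PUGame L Ai Ao) (μ : L × L → ℝ)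
    (α : HPref L Ai Ao → Ai → ℝ) (β : HPref L Ai Ao → Ai → Ao → ℝ)
    (ρH : HPref L Ai Ao) : ℝ :=
  conePrHAux G μ α β ρH.1 ρH.2

end HGame

/- ### Mapping of strategies between `G` and `H` -/

/-- `ĝ` on Player-1 strategies. -/
def ghat1 (α : Pref L Ai Ao → Ai → ℝ) : HPref L Ai Ao → Ai → ℝ :=
  fun ρH => α (g2 ρH)

/-- `ĝ` on Player-2 strategies. -/
def ghat2 (β : Pref L Ai Ao → Ai → Ao → ℝ) : HPref L Ai Ao → Ai → Ao → ℝ :=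
  fun ρH => β (g1 ρH)

/-- `ĝ` on all-powerful Player-2 strategies. -/
def ghatA (β : Pref L Ai Ao → Pref L Ai Ao → Ai → Ao → ℝ) :
    HPref L Ai Ao → Ai → Ao → ℝ :=
  fun ρH => β (g1 ρH) (g2 ρH)

/-- `ĥ` on Player-1 strategies (using the canonical history `h12 ρ ρ` with
`g2 (h12 ρ ρ) = ρ`; well defined for observation-based strategies). -/
def hhat1 (α : HPref L Ai Ao → Ai → ℝ) : Pref L Ai Ao → Ai → ℝ :=
  fun ρ => α (h12 ρ ρ)

/-- `ĥ` on Player-2 strategies. -/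
def hhat2 (β : HPref L Ai Ao → Ai → Ao → ℝ) : Pref L Ai Ao → Ai → Ao → ℝ :=
  fun ρ => β (h12 ρ ρ)

/-- `ĥ` on complete-observation Player-2 strategies, giving an all-powerful
strategy in `G`. -/
def hhatA (β : HPref L Ai Ao → Ai → Ao → ℝ) :
    Pref L Ai Ao → Pref L Ai Ao → Ai → Ao → ℝ :=
  fun ρ1 ρ2 => β (h12 ρ1 ρ2)

/- ### Infinite plays, parity objectives, sure winning -/

/-- The sequence of locations of an infinite play of `G` starting at `ℓ0` with
step sequence `s`. -/
def gLoc (ℓ0 : L) (s : ℕ → Ai × Ao × L) : ℕ → L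
  | 0 => ℓ0
  | j + 1 => (s j).2.2

/-- The actual prefix of a play of `G` up to time `j`. -/
def gTake (ℓ0 : L) (s : ℕ → Ai × Ao × L) (j : ℕ) : Pref L Ai Ao :=
  (ℓ0, (List.ofFn fun i : Fin j => s i).reverse)

/-- The observed prefix of a play of `G` up to time `j`, for observed
locations `obsv`. -/
def gObsTake (obsv : ℕ → L) (s : ℕ → Ai × Ao × L) (j : ℕ) : Pref L Ai Ao :=
  (obsv 0, (List.ofFn fun i : Fin j => ((s i).1, (s i).2.1, obsv ((i : ℕ) + 1))).reverse)

/-- The parity objective: the minimum priority occurring infinitely often is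
even. -/
def ParityHolds (p : L → ℕ) (loc : ℕ → L) : Prop :=
  Even (sInf {k | ∃ᶠ i in Filter.atTop, p (loc i) = k})

section Outcome
variable [Fintype L] [Fintype Ai] [Fintype Ao]

/-- Membership of a play in `Outcome(G, ℓ0, α, β)` for a Player-2 strategy
observing the actual history. -/
def InOutcome (G : PUGame L Ai Ao) (ℓ0 : L) (α : Pref L Ai Ao → Ai → ℝ)
    (β : Pref L Ai Ao → Ai → Ao → ℝ) (s : ℕ → Ai × Ao × L) : Prop :=
  ∃ obsv : ℕ → L,
    (∀ j, 0 < G.un (gLoc ℓ0 s j) (obsv j)) ∧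
    (∀ j, 0 < α (gObsTake obsv s j) (s j).1) ∧
    (∀ j, 0 < β (gTake ℓ0 s j) (s j).1 (s j).2.1) ∧
    (∀ j, 0 < G.Δ (gLoc ℓ0 s j) (s j).1 (s j).2.1 (gLoc ℓ0 s (j + 1)))

/-- Membership of a play in `Outcome(G, ℓ0, α, β^A)` for an all-powerful
Player-2 strategy. -/
def InOutcomeA (G : PUGame L Ai Ao) (ℓ0 : L) (α : Pref L Ai Ao → Ai → ℝ)
    (β : Pref L Ai Ao → Pref L Ai Ao → Ai → Ao → ℝ) (s : ℕ → Ai × Ao × L) : Prop :=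
  ∃ obsv : ℕ → L,
    (∀ j, 0 < G.un (gLoc ℓ0 s j) (obsv j)) ∧
    (∀ j, 0 < α (gObsTake obsv s j) (s j).1) ∧
    (∀ j, 0 < β (gTake ℓ0 s j) (gObsTake obsv s j) (s j).1 (s j).2.1) ∧
    (∀ j, 0 < G.Δ (gLoc ℓ0 s j) (s j).1 (s j).2.1 (gLoc ℓ0 s (j + 1)))

end Outcome

/-- An infinite play of `H`: at each time `j`, the state `(x j).1 : L × L` and
the pair of actions `(x j).2` chosen at that state. -/
abbrev HPlay (L Ai Ao : Type) : Type := ℕ → (L × L) × Ai × Ao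

/-- The `j`-th step of an `H`-play. -/
def hPlayStep (x : HPlay L Ai Ao) (j : ℕ) : Ai × Ao × (L × L) :=
  ((x j).2.1, (x j).2.2, (x (j + 1)).1)

/-- The history of an `H`-play up to time `j`. -/
def hTakePlay (x : HPlay L Ai Ao) (j : ℕ) : HPref L Ai Ao :=
  ((x 0).1, (List.ofFn fun i : Fin j => hPlayStep x i).reverse)

section HOutcome
variable [Fintype L] [Fintype Ai] [Fintype Ao]

/-- An `H`-play is consistent with the strategies `α, β` from initial state
`s0` (all choices and transitions have positive probability). -/
def HConsistent (G : PUGame L Ai Ao) (s0 : L × L)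
    (α : HPref L Ai Ao → Ai → ℝ) (β : HPref L Ai Ao → Ai → Ao → ℝ)
    (x : HPlay L Ai Ao) : Prop :=
  (x 0).1 = s0 ∧
  (∀ j, 0 < α (hTakePlay x j) (x j).2.1) ∧
  (∀ j, 0 < β (hTakePlay x j) (x j).2.1 (x j).2.2) ∧
  (∀ j, 0 < G.Δ (x j).1.1 (x j).2.1 (x j).2.2 (x (j + 1)).1.1 *
          G.un (x (j + 1)).1.1 (x (j + 1)).1.2)

end HOutcome

/- ### Measures on infinite plays -/

/-- The discrete product σ-algebra on infinite plays. -/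
instance playMS (St : Type) : MeasurableSpace (ℕ → St) :=
  @MeasurableSpace.pi ℕ (fun _ => St) (fun _ => ⊤)

/-- The cylinder (cone) of a finite list of steps (in reverse chronological
order): plays whose first steps are exactly the given ones. -/
def listCylinder {St : Type} (l : List St) : Set (ℕ → St) :=
  {s | (List.ofFn fun i : Fin l.length => s i) = l.reverse}

/-- The cylinder (cone) of an `H`-history. -/
def hCylinder (ρH : HPref L Ai Ao) : Set (HPlay L Ai Ao) :=
  {x | (x 0).1 = ρH.1 ∧ (List.ofFn fun i : Fin ρH.2.length => hPlayStep x i) = ρH.2.reverse}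

/-- The map sending an `H`-play to the `G`-play of first components with the
same actions. -/
def proj1Play (x : HPlay L Ai Ao) : ℕ → Ai × Ao × L :=
  fun j => ((x j).2.1, (x j).2.2, (x (j + 1)).1.1)

section MeasCones
variable [Fintype L] [Fintype Ai] [Fintype Ao]

/-- `ν` extends the cone probabilities `Pr^{α,β}_{ℓ0}` of `G`. -/
def GCones (G : PUGame L Ai Ao) (ℓ0 : L) (α : Pref L Ai Ao → Ai → ℝ)
    (β : Pref L Ai Ao → Ai → Ao → ℝ) (ν : Measure (ℕ → Ai × Ao × L)) : Prop :=
  ∀ l : List (Ai × Ao × L),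
    ν (listCylinder l) = ENNReal.ofReal (conePr G α β (ℓ0, l))

/-- `ν` extends the cone probabilities `Pr^{α,β^A}_{ℓ0}` of `G` (all-powerful
Player 2). -/
def GConesA (G : PUGame L Ai Ao) (ℓ0 : L) (α : Pref L Ai Ao → Ai → ℝ)
    (β : Pref L Ai Ao → Pref L Ai Ao → Ai → Ao → ℝ)
    (ν : Measure (ℕ → Ai × Ao × L)) : Prop :=
  ∀ l : List (Ai × Ao × L),
    ν (listCylinder l) = ENNReal.ofReal (conePrA G α β (ℓ0, l))

/-- `ν` extends the cone probabilities `Pr^{α,β}_μ` of `H`. -/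
def HCones (G : PUGame L Ai Ao) (μ : L × L → ℝ) (α : HPref L Ai Ao → Ai → ℝ)
    (β : HPref L Ai Ao → Ai → Ao → ℝ) (ν : Measure (HPlay L Ai Ao)) : Prop :=
  ∀ ρH : HPref L Ai Ao,
    ν (hCylinder ρH) = ENNReal.ofReal (conePrH G μ α β ρH)

end MeasCones

/-!
A play of `G` together with a sequence of observed locations is the same thing as a play of `H`,
and under `ĝ` every positivity requirement of one outcome becomes a requirement of the other; only
the positivity of the initial observation is not seen by `H`, and it is the side condition on the
initial state `(ℓ0, ℓ)`. Moreover `ĝ` maps Player-1 strategies of `G` onto the observation-based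
ones of `H`, and all-powerful Player-2 strategies onto all Player-2 strategies of `H`. Hence both
games quantify over the same plays and strategies, whatever the objective.
-/

section Histories

theorem h12_g1_g2 (ρH : HPref L Ai Ao) : h12 (g1 ρH) (g2 ρH) = ρH := by
  refine Prod.ext rfl ?_
  simp only [h12, g1, g2, List.zipWith_map, List.zipWith_self, Prod.mk.eta, List.map_id']

theorem g2_h12_self (ρ : Pref L Ai Ao) : g2 (h12 ρ ρ) = ρ := by
  refine Prod.ext rfl ?_
  simp only [g2, h12, List.zipWith_self, List.map_map, Function.comp_def, Prod.mk.eta,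
    List.map_id']

theorem g1_hTakePlay (x : HPlay L Ai Ao) (j : ℕ) :
    g1 (hTakePlay x j) = gTake (x 0).1.1 (proj1Play x) j := by
  simp only [g1, hTakePlay, gTake, List.map_reverse, List.map_ofFn]
  rfl

theorem g2_hTakePlay (x : HPlay L Ai Ao) (j : ℕ) :
    g2 (hTakePlay x j) = gObsTake (fun i => (x i).1.2) (proj1Play x) j := by
  simp only [g2, hTakePlay, gObsTake, List.map_reverse, List.map_ofFn]
  rfl

theorem gLoc_proj1Play (x : HPlay L Ai Ao) (j : ℕ) :
    gLoc (x 0).1.1 (proj1Play x) j = (x j).1.1 := by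
  cases j <;> rfl

end Histories

section Strategies

theorem obsBased1_ghat1 (α : Pref L Ai Ao → Ai → ℝ) : ObsBased1 (ghat1 α) :=
  fun _ _ h => congrArg α h

theorem ghat1_hhat1 {α : HPref L Ai Ao → Ai → ℝ} (hα : ObsBased1 α) : ghat1 (hhat1 α) = α :=
  funext fun ρH => hα _ ρH (g2_h12_self (g2 ρH))

theorem ghatA_hhatA (β : HPref L Ai Ao → Ai → Ao → ℝ) : ghatA (hhatA β) = β :=
  funext fun ρH => congrArg β (h12_g1_g2 ρH)

/-- `ĝ` on randomized Player-1 strategies, bundled. -/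
def Strat1.toH [Fintype Ai] (α : Strat1 L Ai Ao) : HStrat1 L Ai Ao where
  toFun := ghat1 α.toFun
  nonneg _ := α.nonneg _
  sum_one _ := α.sum_one _

/-- `ĥ` on randomized Player-1 strategies, bundled; a right inverse of `Strat1.toH` on
observation-based strategies only. -/
def HStrat1.toG [Fintype Ai] (α : HStrat1 L Ai Ao) : Strat1 L Ai Ao where
  toFun := hhat1 α.toFun
  nonneg _ := α.nonneg _
  sum_one _ := α.sum_one _

/-- `ĝ` on all-powerful Player-2 strategies, bundled. -/
def StratA.toH [Fintype Ao] (β : StratA L Ai Ao) : HStrat2 L Ai Ao where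
  toFun := ghatA β.toFun
  nonneg _ := β.nonneg _ _
  sum_one _ := β.sum_one _ _

/-- `ĥ` on complete-observation Player-2 strategies, bundled; a right inverse of `StratA.toH`. -/
def HStrat2.toG [Fintype Ao] (β : HStrat2 L Ai Ao) : StratA L Ai Ao where
  toFun := hhatA β.toFun
  nonneg _ _ := β.nonneg _
  sum_one _ _ := β.sum_one _

end Strategies

section Plays

/-- The play of `H` in which the play `(ℓ0, s)` of `G` is observed as `obsv`. -/
def pairPlay (ℓ0 : L) (s : ℕ → Ai × Ao × L) (obsv : ℕ → L) : HPlay L Ai Ao :=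
  fun j => ((gLoc ℓ0 s j, obsv j), (s j).1, (s j).2.1)

variable [Fintype L] [Fintype Ai] [Fintype Ao]

/-- The play `(ℓ0, s)` of `G` is compatible with `α` and the all-powerful `β` when it is observed
as `obsv`: the condition on the witness in `InOutcomeA`. -/
def CompatibleWithObs (G : PUGame L Ai Ao) (ℓ0 : L) (α : Pref L Ai Ao → Ai → ℝ)
    (β : Pref L Ai Ao → Pref L Ai Ao → Ai → Ao → ℝ) (s : ℕ → Ai × Ao × L) (obsv : ℕ → L) : Prop :=
  (∀ j, 0 < G.un (gLoc ℓ0 s j) (obsv j)) ∧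
  (∀ j, 0 < α (gObsTake obsv s j) (s j).1) ∧
  (∀ j, 0 < β (gTake ℓ0 s j) (gObsTake obsv s j) (s j).1 (s j).2.1) ∧
  (∀ j, 0 < G.Δ (gLoc ℓ0 s j) (s j).1 (s j).2.1 (gLoc ℓ0 s (j + 1)))

theorem PUGame.Δ_mul_un_pos_iff (G : PUGame L Ai Ao) {ℓ ℓ' ℓ'' : L} {σi : Ai} {σo : Ao} :
    0 < G.Δ ℓ σi σo ℓ' * G.un ℓ' ℓ'' ↔ 0 < G.Δ ℓ σi σo ℓ' ∧ 0 < G.un ℓ' ℓ'' :=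
  ⟨fun h => ⟨pos_of_mul_pos_left h (G.un_nonneg _ _), pos_of_mul_pos_right h (G.Δ_nonneg _ _ _ _)⟩,
    fun h => mul_pos h.1 h.2⟩

theorem compatibleWithObs_proj1Play_iff {G : PUGame L Ai Ao} {α : Pref L Ai Ao → Ai → ℝ}
    {β : Pref L Ai Ao → Pref L Ai Ao → Ai → Ao → ℝ} {x : HPlay L Ai Ao} :
    CompatibleWithObs G (x 0).1.1 α β (proj1Play x) (fun j => (x j).1.2) ↔
      0 < G.un (x 0).1.1 (x 0).1.2 ∧ HConsistent G (x 0).1 (ghat1 α) (ghatA β) x := by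
  simp only [CompatibleWithObs, HConsistent, ghat1, ghatA, g1_hTakePlay, g2_hTakePlay,
    gLoc_proj1Play, G.Δ_mul_un_pos_iff, forall_and, true_and]
  rw [← Nat.and_forall_add_one (p := fun j => 0 < G.un (x j).1.1 (x j).1.2)]
  simp only [proj1Play]
  tauto

theorem inOutcomeA_iff_exists_hConsistent {G : PUGame L Ai Ao} {ℓ0 : L}
    {α : Pref L Ai Ao → Ai → ℝ} {β : Pref L Ai Ao → Pref L Ai Ao → Ai → Ao → ℝ}
    {s : ℕ → Ai × Ao × L} :
    InOutcomeA G ℓ0 α β s ↔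
      ∃ ℓ x, 0 < G.un ℓ0 ℓ ∧ HConsistent G (ℓ0, ℓ) (ghat1 α) (ghatA β) x ∧ proj1Play x = s := by
  constructor
  · rintro ⟨obsv, hobsv⟩
    obtain ⟨hun, hx⟩ := (compatibleWithObs_proj1Play_iff (x := pairPlay ℓ0 s obsv)).1 hobsv
    exact ⟨obsv 0, pairPlay ℓ0 s obsv, hun, hx, rfl⟩
  · rintro ⟨ℓ, x, hun, hx, rfl⟩
    obtain ⟨rfl, rfl⟩ : (x 0).1.1 = ℓ0 ∧ (x 0).1.2 = ℓ := Prod.ext_iff.1 hx.1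
    exact ⟨fun j => (x j).1.2, compatibleWithObs_proj1Play_iff.2 ⟨hun, hx⟩⟩

end Plays

theorem sure_winning_equiv_allpowerful_general [Fintype L] [Fintype Ai] [Fintype Ao]
    (G : PUGame L Ai Ao) (φ : Set (ℕ → L × Ai × Ao)) (ℓ0 : L) :
    (∃ α : Strat1 L Ai Ao, ∀ βA : StratA L Ai Ao, ∀ s : ℕ → Ai × Ao × L,
        InOutcomeA G ℓ0 α.toFun βA.toFun s →
        (fun j => (gLoc ℓ0 s j, (s j).1, (s j).2.1)) ∈ φ) ↔
    (∃ αH : HStrat1 L Ai Ao, ObsBased1 αH.toFun ∧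
        ∀ ℓ : L, 0 < G.un ℓ0 ℓ → ∀ βH : HStrat2 L Ai Ao, ∀ x : HPlay L Ai Ao,
          HConsistent G (ℓ0, ℓ) αH.toFun βH.toFun x →
          (fun j => ((x j).1.1, (x j).2)) ∈ φ) := by
  have play_eq {ℓ : L} {x : HPlay L Ai Ao} (hx : (x 0).1 = (ℓ0, ℓ)) (j : ℕ) :
      (gLoc ℓ0 (proj1Play x) j, (proj1Play x j).1, (proj1Play x j).2.1) =
        ((x j).1.1, (x j).2) := by
    obtain rfl : (x 0).1.1 = ℓ0 := congrArg Prod.fst hx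
    rw [gLoc_proj1Play, proj1Play]
  constructor
  · rintro ⟨α, hα⟩
    refine ⟨α.toH, obsBased1_ghat1 α.toFun, fun ℓ hun βH x hx => ?_⟩
    rw [← funext (play_eq hx.1)]
    rw [← ghatA_hhatA βH.toFun] at hx
    exact hα βH.toG _ (inOutcomeA_iff_exists_hConsistent.2 ⟨ℓ, x, hun, hx, rfl⟩)
  · rintro ⟨αH, hobs, hαH⟩
    refine ⟨αH.toG, fun βA s hs => ?_⟩
    obtain ⟨ℓ, x, hun, hx, rfl⟩ := inOutcomeA_iff_exists_hConsistent.1 hs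
    rw [funext (play_eq hx.1)]
    refine hαH ℓ hun βA.toH x ?_
    rwa [HStrat1.toG, ghat1_hhat1 hobs] at hx

/-- Player 1 has a sure winning strategy from `ℓ0` in `G` for
`Parity(p_G)` against all all-powerful Player-2 strategies iff Player 1 has an
observation-based strategy in `H` that is sure winning for `Parity(p_H)` from
every state `(ℓ0, ℓ)` with `un(ℓ0)(ℓ) > 0` against all Player-2 strategies. -/
theorem sure_winning_equiv_allpowerful {L Ai Ao : Type}
    [Fintype L] [Fintype Ai] [Fintype Ao]
    (G : PUGame L Ai Ao) (pG : L → ℕ) (d : ℕ) (hd : ∀ ℓ, pG ℓ ≤ d) (ℓ0 : L) :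
    (∃ α : Strat1 L Ai Ao, ∀ βA : StratA L Ai Ao, ∀ s : ℕ → Ai × Ao × L,
        InOutcomeA G ℓ0 α.toFun βA.toFun s → ParityHolds pG (gLoc ℓ0 s)) ↔
    (∃ αH : HStrat1 L Ai Ao, ObsBased1 αH.toFun ∧
        ∀ ℓ : L, 0 < G.un ℓ0 ℓ → ∀ βH : HStrat2 L Ai Ao, ∀ x : HPlay L Ai Ao,
          HConsistent G (ℓ0, ℓ) αH.toFun βH.toFun x →
          ParityHolds pG fun i => (x i).1.1) :=
  sure_winning_equiv_allpowerful_general G {y | ParityHolds pG fun j => (y j).1} ℓ0
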